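/- Let Λ be a lattice of full rank in ℝ² with successive minima λ₁ ≤ λ₂ and corresponding minimal basis vectors x₁, x₂, and let Λ_WR be the lattice spanned over ℤ by x₁ and (λ₁/λ₂)x₂. Then Δ(Λ_WR) ≥ Δ(Λ), with equality if and only if Λ = Λ_WR, which happens if and only if Λ is well-rounded. -/

import Mathlib

noncomputable section

open InnerProductGeometry Real
open scoped Classical

/-- The Euclidean plane `ℝ²`. -/
abbrev E2 := EuclideanSpace ℝ (Fin 2)

/-- `x₁, x₂` form a ℤ-basis of the lattice `Λ ⊆ ℝ²`: they are linearly independent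
over ℝ and `Λ` is exactly the set of their integer linear combinations. -/
def IsZBasis (Λ : Set E2) (x₁ x₂ : E2) : Prop :=
  LinearIndependent ℝ ![x₁, x₂] ∧ Λ = {v : E2 | ∃ a b : ℤ, v = a • x₁ + b • x₂}

/-- `Λ` is a lattice of full rank in `ℝ²`, i.e. `Λ = XZ²` for an invertible matrix `X`. -/
def IsLattice (Λ : Set E2) : Prop := ∃ x₁ x₂ : E2, IsZBasis Λ x₁ x₂

/-- The `i`-th successive minimum of `Λ`:
`λᵢ = inf {λ > 0 : Λ ∩ λB contains i linearly independent nonzero vectors}`. -/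
noncomputable def succMin (Λ : Set E2) (i : ℕ) : ℝ :=
  sInf {r : ℝ | 0 < r ∧ ∃ v : Fin i → E2,
    (∀ j, v j ∈ Λ ∧ ‖v j‖ ≤ r) ∧ LinearIndependent ℝ v}

/-- `|det X|` for the basis matrix with columns `x₁, x₂`. -/
def detB (x₁ x₂ : E2) : ℝ := |x₁ 0 * x₂ 1 - x₁ 1 * x₂ 0|

/-- The determinant of a lattice: `|det X|` for a basis matrix `X` of `Λ`
(independent of the choice of basis). -/
noncomputable def latDet (Λ : Set E2) : ℝ :=
  if h : IsLattice Λ then detB h.choose h.choose_spec.choose else 0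

/-- The lattice packing density `Δ(Λ) = π λ₁² / (4 det Λ)`. -/
noncomputable def density (Λ : Set E2) : ℝ :=
  π * (succMin Λ 1) ^ 2 / (4 * latDet Λ)

/-- `x₁, x₂` are vectors of `Λ` corresponding to the successive minima, chosen so that
the angle between them lies in `[0, π/2]`. -/
def IsMinPair (Λ : Set E2) (x₁ x₂ : E2) : Prop :=
  x₁ ∈ Λ ∧ x₂ ∈ Λ ∧ LinearIndependent ℝ ![x₁, x₂] ∧
    ‖x₁‖ = succMin Λ 1 ∧ ‖x₂‖ = succMin Λ 2 ∧ angle x₁ x₂ ≤ π / 2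

/-- The angle `θ(Λ)` of a lattice: the angle between a pair of vectors corresponding to the
successive minima chosen with angle in `[0, π/2]` (for a well-rounded lattice this does not
depend on the choice of such a pair). -/
noncomputable def latAngle (Λ : Set E2) : ℝ :=
  if h : ∃ p : E2 × E2, IsMinPair Λ p.1 p.2 then angle h.choose.1 h.choose.2 else 0

/-- `Λ` and `Ω` are similar lattices: `Ω = α U Λ` for a nonzero real `α` and an
orthogonal `2×2` matrix `U`. -/
def LatSimilar (Λ Ω : Set E2) : Prop :=
  ∃ (α : ℝ) (U : Matrix (Fin 2) (Fin 2) ℝ), α ≠ 0 ∧ U.transpose * U = 1 ∧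
    Ω = (fun v => α • Matrix.toEuclideanLin U v) '' Λ

/-- The hexagonal lattice, spanned over ℤ by `(1, 0)` and `(1/2, √3/2)`. -/
def hexLattice : Set E2 :=
  {v : E2 | ∃ a b : ℤ, v = a • ((WithLp.equiv 2 (Fin 2 → ℝ)).symm ![1, 0]) +
    b • ((WithLp.equiv 2 (Fin 2 → ℝ)).symm ![1 / 2, Real.sqrt 3 / 2])}

/-!
A basis `x₁, x₂` attaining the successive minima is reduced: `‖x₁‖ ≤ ‖x₂‖` and
`2|⟨x₁, x₂⟩| ≤ ‖x₁‖²`, the latter because `x₂ ± x₁` is not shorter than `x₂`. Shrinking `x₂` by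
`c = λ₁/λ₂ ≤ 1` keeps the basis reduced, and the first vector of a reduced basis is a shortest
nonzero lattice vector. So `Λ_WR` has the same `λ₁` as `Λ` and `c` times its determinant, whence
`Δ(Λ_WR) = Δ(Λ) / c`. Equality of the lattices forces equality of the densities, hence `c = 1`.
-/

section LagrangeReduced

variable {E : Type*} [NormedAddCommGroup E] [InnerProductSpace ℝ E] {x y : E}

/-- The pair `x, y` is reduced in the sense of Lagrange and Gauss, which makes `x`, if nonzero,
a shortest nonzero vector of `ℤx + ℤy`. The angle between `x` and `y` may be obtuse. -/
def IsLagrangeReduced (x y : E) : Prop :=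
  ‖x‖ ≤ ‖y‖ ∧ 2 * |inner ℝ x y| ≤ ‖x‖ ^ 2

theorem two_mul_abs_inner_le_sq_norm (hadd : ‖y‖ ≤ ‖x + y‖) (hsub : ‖y‖ ≤ ‖x - y‖) :
    2 * |inner ℝ x y| ≤ ‖x‖ ^ 2 := by
  have hadd_sq : ‖y‖ ^ 2 ≤ ‖x + y‖ ^ 2 := by gcongr
  have hsub_sq : ‖y‖ ^ 2 ≤ ‖x - y‖ ^ 2 := by gcongr
  rw [norm_add_sq_real] at hadd_sq
  rw [norm_sub_sq_real] at hsub_sq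
  have habs : |inner ℝ x y| ≤ ‖x‖ ^ 2 / 2 := abs_le.2 ⟨by linarith, by linarith⟩
  linarith

namespace IsLagrangeReduced

theorem smul_right {c : ℝ} (h : IsLagrangeReduced x y) (hc : |c| ≤ 1) (hle : ‖x‖ ≤ ‖c • y‖) :
    IsLagrangeReduced x (c • y) := by
  refine ⟨hle, ?_⟩
  calc 2 * |inner ℝ x (c • y)| = |c| * (2 * |inner ℝ x y|) := by
        rw [inner_smul_right, abs_mul]; ring
    _ ≤ 1 * (2 * |inner ℝ x y|) := by gcongr
    _ ≤ ‖x‖ ^ 2 := by rw [one_mul]; exact h.2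

theorem smul_norm_div_norm (h : IsLagrangeReduced x y) (hy : y ≠ 0) :
    IsLagrangeReduced x ((‖x‖ / ‖y‖) • y) := by
  have hy_pos : 0 < ‖y‖ := norm_pos_iff.2 hy
  have hratio : |‖x‖ / ‖y‖| = ‖x‖ / ‖y‖ := abs_of_nonneg (by positivity)
  refine h.smul_right ?_ ?_
  · rw [hratio]
    exact (div_le_one hy_pos).2 h.1
  · rw [norm_smul, Real.norm_eq_abs, hratio, div_mul_cancel₀ _ hy_pos.ne']

theorem mul_sq_norm_le_sq_norm_smul_add_smul (h : IsLagrangeReduced x y) (a b : ℝ) :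
    (a ^ 2 - |a * b| + b ^ 2) * ‖x‖ ^ 2 ≤ ‖a • x + b • y‖ ^ 2 := by
  have hnorm : ‖a • x + b • y‖ ^ 2 =
      a ^ 2 * ‖x‖ ^ 2 + 2 * (a * b * inner ℝ x y) + b ^ 2 * ‖y‖ ^ 2 := by
    rw [norm_add_sq_real, real_inner_smul_left, real_inner_smul_right, norm_smul, norm_smul,
      mul_pow, mul_pow, Real.norm_eq_abs, Real.norm_eq_abs, sq_abs, sq_abs, mul_assoc a b]
  have hcross : -(|a * b| * ‖x‖ ^ 2) ≤ 2 * (a * b * inner ℝ x y) := by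
    have hinner : |a * b| * (2 * |inner ℝ x y|) ≤ |a * b| * ‖x‖ ^ 2 := by gcongr; exact h.2
    have habs := neg_abs_le (a * b * inner ℝ x y)
    rw [abs_mul] at habs
    linarith
  have hlast : b ^ 2 * ‖x‖ ^ 2 ≤ b ^ 2 * ‖y‖ ^ 2 := by gcongr; exact h.1
  rw [hnorm]
  linarith

end IsLagrangeReduced

theorem one_le_sq_sub_abs_mul_add_sq {a b : ℤ} (h : a ≠ 0 ∨ b ≠ 0) :
    1 ≤ a ^ 2 - |a * b| + b ^ 2 := by
  have hpos : 0 < |a| ∨ 0 < |b| := h.imp abs_pos.2 abs_pos.2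
  rw [← sq_abs a, ← sq_abs b, abs_mul]
  by_contra! hlt
  rcases hpos with ha | hb
  · nlinarith [sq_nonneg (|a| - 2 * |b|)]
  · nlinarith [sq_nonneg (2 * |a| - |b|)]

theorem IsLagrangeReduced.norm_le_norm_zsmul_add_zsmul (h : IsLagrangeReduced x y) {a b : ℤ}
    (hab : a ≠ 0 ∨ b ≠ 0) : ‖x‖ ≤ ‖a • x + b • y‖ := by
  have hcoeff : (1 : ℝ) ≤ (a : ℝ) ^ 2 - |(a : ℝ) * b| + (b : ℝ) ^ 2 := by
    exact_mod_cast one_le_sq_sub_abs_mul_add_sq hab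
  refine le_of_sq_le_sq ?_ (norm_nonneg _)
  calc ‖x‖ ^ 2 ≤ ((a : ℝ) ^ 2 - |(a : ℝ) * b| + (b : ℝ) ^ 2) * ‖x‖ ^ 2 :=
        le_mul_of_one_le_left (sq_nonneg _) hcoeff
    _ ≤ ‖(a : ℝ) • x + (b : ℝ) • y‖ ^ 2 := h.mul_sq_norm_le_sq_norm_smul_add_smul a b
    _ = ‖a • x + b • y‖ ^ 2 := by rw [Int.cast_smul_eq_zsmul, Int.cast_smul_eq_zsmul]

end LagrangeReduced

theorem detB_eq_abs_basisDet (x y : E2) :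
    detB x y = |(EuclideanSpace.basisFun (Fin 2) ℝ).toBasis.det ![x, y]| := by
  simp [detB, Module.Basis.det_apply, Matrix.det_fin_two, Module.Basis.toMatrix_apply, mul_comm]

theorem detB_pos {x y : E2} (h : LinearIndependent ℝ ![x, y]) : 0 < detB x y := by
  have hspan : Submodule.span ℝ (Set.range ![x, y]) = ⊤ :=
    h.span_eq_top_of_card_eq_finrank (by simp)
  rw [detB_eq_abs_basisDet]
  exact abs_pos.2 ((Module.Basis.is_basis_iff_det _).1 ⟨h, hspan⟩).ne_zero

theorem detB_smul_add_smul (a b c d : ℝ) (x y : E2) :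
    detB (a • x + b • y) (c • x + d • y) = |a * d - b * c| * detB x y := by
  simp only [detB, ← abs_mul, PiLp.add_apply, PiLp.smul_apply, smul_eq_mul]
  ring_nf

theorem detB_smul_right (c : ℝ) (x y : E2) : detB x (c • y) = |c| * detB x y := by
  simpa using detB_smul_add_smul 1 0 0 c x y

theorem succMin_le {Λ : Set E2} {i : ℕ} {r : ℝ} (hr : 0 < r) {v : Fin i → E2}
    (hv : ∀ j, v j ∈ Λ ∧ ‖v j‖ ≤ r) (hli : LinearIndependent ℝ v) : succMin Λ i ≤ r :=
  csInf_le ⟨0, fun _ hs ↦ hs.1.le⟩ ⟨hr, v, hv, hli⟩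

theorem succMin_one_le_norm {Λ : Set E2} {v : E2} (hv : v ∈ Λ) (hv0 : v ≠ 0) :
    succMin Λ 1 ≤ ‖v‖ :=
  succMin_le (norm_pos_iff.2 hv0) (v := fun _ ↦ v) (fun _ ↦ ⟨hv, le_rfl⟩)
    (LinearIndependent.of_subsingleton 0 hv0)

theorem succMin_two_le_max_norm {Λ : Set E2} {v w : E2} (hv : v ∈ Λ) (hw : w ∈ Λ)
    (hli : LinearIndependent ℝ ![v, w]) : succMin Λ 2 ≤ max ‖v‖ ‖w‖ := by
  have hv0 : v ≠ 0 := hli.ne_zero 0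
  refine succMin_le (lt_max_of_lt_left (norm_pos_iff.2 hv0)) (fun j ↦ ?_) hli
  fin_cases j
  · exact ⟨hv, le_max_left _ _⟩
  · exact ⟨hw, le_max_right _ _⟩

theorem succMin_one_eq_norm_of_forall_le {Λ : Set E2} {x : E2} (hx : x ∈ Λ) (hx0 : x ≠ 0)
    (hshortest : ∀ v ∈ Λ, v ≠ 0 → ‖x‖ ≤ ‖v‖) : succMin Λ 1 = ‖x‖ := by
  refine le_antisymm (succMin_one_le_norm hx hx0) (le_csInf ?_ ?_)
  · exact ⟨‖x‖, norm_pos_iff.2 hx0, fun _ ↦ x, fun _ ↦ ⟨hx, le_rfl⟩,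
      LinearIndependent.of_subsingleton 0 hx0⟩
  · rintro r ⟨-, v, hv, hli⟩
    exact (hshortest _ (hv 0).1 (hli.ne_zero 0)).trans (hv 0).2

namespace IsZBasis

variable {Λ Λ' : Set E2} {x y u v : E2} {c : ℝ}

theorem zsmul_add_zsmul_mem (h : IsZBasis Λ x y) (a b : ℤ) : a • x + b • y ∈ Λ := by
  rw [h.2]
  exact ⟨a, b, rfl⟩

theorem smul_right (h : IsZBasis Λ x y) (hc : c ≠ 0) :
    IsZBasis {v : E2 | ∃ a b : ℤ, v = a • x + b • (c • y)} x (c • y) :=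
  ⟨by simpa using (LinearIndependent.pair_smul_smul_iff isUnit_one hc.isUnit).2 h.1, rfl⟩

theorem left_mem (h : IsZBasis Λ x y) : x ∈ Λ := by
  simpa using h.zsmul_add_zsmul_mem 1 0

theorem right_mem (h : IsZBasis Λ x y) : y ∈ Λ := by
  simpa using h.zsmul_add_zsmul_mem 0 1

theorem exists_eq_smul_add_smul (h : IsZBasis Λ x y) (hv : v ∈ Λ) :
    ∃ a b : ℤ, v = (a : ℝ) • x + (b : ℝ) • y := by
  simpa only [h.2, Set.mem_ofPred_eq, Int.cast_smul_eq_zsmul] using hv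

theorem detB_le_detB (h : IsZBasis Λ x y) (h' : IsZBasis Λ u v) : detB x y ≤ detB u v := by
  obtain ⟨a, b, hu⟩ := h.exists_eq_smul_add_smul h'.left_mem
  obtain ⟨c, d, hv⟩ := h.exists_eq_smul_add_smul h'.right_mem
  have hdet : detB u v = |((a * d - b * c : ℤ) : ℝ)| * detB x y := by
    rw [hu, hv, detB_smul_add_smul]
    push_cast
    rfl
  have hne : a * d - b * c ≠ 0 := by
    intro hzero
    simpa [hdet, hzero] using detB_pos h'.1
  have hone : (1 : ℝ) ≤ |((a * d - b * c : ℤ) : ℝ)| := by exact_mod_cast Int.one_le_abs hne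
  rw [hdet]
  exact le_mul_of_one_le_left (detB_pos h.1).le hone

theorem latDet_eq_detB (h : IsZBasis Λ x y) : latDet Λ = detB x y := by
  have hΛ : IsLattice Λ := ⟨x, y, h⟩
  have hchoice := hΛ.choose_spec.choose_spec
  rw [latDet, dif_pos hΛ]
  exact le_antisymm (hchoice.detB_le_detB h) (h.detB_le_detB hchoice)

theorem succMin_two_le_norm_zsmul_add (h : IsZBasis Λ x y) (hx : ‖x‖ = succMin Λ 1) (n : ℤ) :
    succMin Λ 2 ≤ ‖n • x + y‖ := by
  have hmem : n • x + y ∈ Λ := by simpa using h.zsmul_add_zsmul_mem n 1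
  have hli : LinearIndependent ℝ ![x, n • x + y] :=
    (LinearIndependent.pair_add_smul_right_iff n).2 h.1
  have hle : ‖x‖ ≤ ‖n • x + y‖ := hx.trans_le (succMin_one_le_norm hmem (hli.ne_zero 1))
  simpa only [max_eq_right hle] using succMin_two_le_max_norm h.left_mem hmem hli

theorem isLagrangeReduced (h : IsZBasis Λ x y) (hx : ‖x‖ = succMin Λ 1)
    (hy : ‖y‖ = succMin Λ 2) : IsLagrangeReduced x y := by
  refine ⟨hx.trans_le (succMin_one_le_norm h.right_mem (h.1.ne_zero 1)),
    two_mul_abs_inner_le_sq_norm ?_ ?_⟩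
  · simpa [hy] using h.succMin_two_le_norm_zsmul_add hx 1
  · rw [norm_sub_rev, hy, sub_eq_neg_add]
    simpa using h.succMin_two_le_norm_zsmul_add hx (-1)

theorem succMin_one_eq_norm (h : IsZBasis Λ x y) (hred : IsLagrangeReduced x y) :
    succMin Λ 1 = ‖x‖ := by
  refine succMin_one_eq_norm_of_forall_le h.left_mem (h.1.ne_zero 0) fun v hv hv0 ↦ ?_
  rw [h.2] at hv
  obtain ⟨a, b, rfl⟩ := hv
  refine hred.norm_le_norm_zsmul_add_zsmul ?_
  contrapose! hv0
  simp [hv0.1, hv0.2]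

theorem density_eq (h : IsZBasis Λ x y) (hred : IsLagrangeReduced x y) :
    density Λ = π * ‖x‖ ^ 2 / (4 * detB x y) := by
  rw [density, h.succMin_one_eq_norm hred, h.latDet_eq_detB]

theorem density_pos (h : IsZBasis Λ x y) (hred : IsLagrangeReduced x y) : 0 < density Λ := by
  have hx : 0 < ‖x‖ := norm_pos_iff.2 (h.1.ne_zero 0)
  have hdet := detB_pos h.1
  rw [h.density_eq hred]
  positivity

theorem density_eq_density_div_abs (h : IsZBasis Λ x y) (h' : IsZBasis Λ' x (c • y))
    (hred : IsLagrangeReduced x y) (hred' : IsLagrangeReduced x (c • y)) :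
    density Λ' = density Λ / |c| := by
  rw [h.density_eq hred, h'.density_eq hred', detB_smul_right, div_div]
  ring_nf

end IsZBasis

theorem stmt6_general {Λ ΛWR : Set E2} {x₁ x₂ : E2} (hbasis : IsZBasis Λ x₁ x₂)
    (hx₁ : ‖x₁‖ = succMin Λ 1) (hx₂ : ‖x₂‖ = succMin Λ 2)
    (hdef : ΛWR = {v : E2 | ∃ a b : ℤ,
      v = a • x₁ + b • ((succMin Λ 1 / succMin Λ 2) • x₂)}) :
    density Λ ≤ density ΛWR ∧
      (density ΛWR = density Λ ↔ Λ = ΛWR) ∧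
      (Λ = ΛWR ↔ succMin Λ 1 = succMin Λ 2) := by
  have hred := hbasis.isLagrangeReduced hx₁ hx₂
  have hpos₁ : 0 < ‖x₁‖ := norm_pos_iff.2 (hbasis.1.ne_zero 0)
  have hpos₂ : 0 < ‖x₂‖ := norm_pos_iff.2 (hbasis.1.ne_zero 1)
  have hratio_pos : 0 < ‖x₁‖ / ‖x₂‖ := div_pos hpos₁ hpos₂
  rw [← hx₁, ← hx₂] at hdef ⊢
  have hbasisWR : IsZBasis ΛWR x₁ ((‖x₁‖ / ‖x₂‖) • x₂) :=
    hdef ▸ hbasis.smul_right hratio_pos.ne'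
  have hdensity : density ΛWR = density Λ / (‖x₁‖ / ‖x₂‖) := by
    simpa only [abs_of_pos hratio_pos] using
      hbasis.density_eq_density_div_abs hbasisWR hred (hred.smul_norm_div_norm (hbasis.1.ne_zero 1))
  have hdensity_iff : density ΛWR = density Λ ↔ ‖x₁‖ = ‖x₂‖ := by
    rw [hdensity, div_eq_iff hratio_pos.ne', left_eq_mul₀ (hbasis.density_pos hred).ne',
      div_eq_one_iff_eq hpos₂.ne']
  have heq_iff : Λ = ΛWR ↔ ‖x₁‖ = ‖x₂‖ := by
    refine ⟨fun heq ↦ hdensity_iff.1 (by rw [heq]), fun hnorm ↦ ?_⟩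
    simp only [hbasis.2, hdef, hnorm, div_self hpos₂.ne', one_smul]
  refine ⟨?_, hdensity_iff.trans heq_iff.symm, heq_iff⟩
  rw [hdensity]
  exact le_div_self (hbasis.density_pos hred).le hratio_pos ((div_le_one hpos₂).2 hred.1)

/-- For a full-rank lattice `Λ ⊆ ℝ²` with minimal basis `x₁, x₂` and
`Λ_WR = ℤx₁ + ℤ(λ₁/λ₂)x₂`, one has `Δ(Λ_WR) ≥ Δ(Λ)`, with equality iff `Λ = Λ_WR`,
which happens iff `Λ` is well-rounded. -/
theorem stmt6 (Λ : Set E2) (hΛ : IsLattice Λ) (x₁ x₂ : E2)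
    (hmin : IsMinPair Λ x₁ x₂) (hbasis : IsZBasis Λ x₁ x₂)
    (ΛWR : Set E2)
    (hdef : ΛWR = {v : E2 | ∃ a b : ℤ,
      v = a • x₁ + b • ((succMin Λ 1 / succMin Λ 2) • x₂)}) :
    density Λ ≤ density ΛWR ∧
      (density ΛWR = density Λ ↔ Λ = ΛWR) ∧
      (Λ = ΛWR ↔ succMin Λ 1 = succMin Λ 2) := by
  obtain ⟨-, -, -, hx₁, hx₂, -⟩ := hmin
  exact stmt6_general hbasis hx₁ hx₂ hdef
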